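/- arXiv:1712.10324 — 2 statements merged into one kernel-verified Lean document; each statement's English description precedes it below -/
import Mathlib

section
/- For every real number n > 0, the double integral ∫₀^∞ ∫₀^∞ cos((π/2)(n x² − y²/n)) · cos(π x y) / (cosh(π x) cosh(π y)) dx dy equals (√n/2)·I₁² − (√n/2)·I₂² + √n·I₁·I₂, where I₁ = ∫₀^∞ (cosh(π x/2)/cosh(π x)) · cos(π n x²/2) dx and I₂ = ∫₀^∞ (cosh(π x/2)/cosh(π x)) · sin(π n x²/2) dx. -/
/-!
Write `s(t) = 1 / cosh (π t)` and `E(u) = exp (i π n u² / 2)`. By parity the double integral is a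
quarter of the real part of the integral over the whole plane of
`exp (i ((π/2)(n x² - y²/n) + π x y)) s(x) s(y)`. The function `s` is its own Fourier transform
(`integral_exp_mul_sechPi`), so the `y`-integral, the pairing of `s` with a Fresnel kernel, can be
replaced by the pairing of `s` with the transformed kernel (`integral_fresnel_mul_sechPi`). With
`v` as the dual variable this gives `√n (1 - i) / 2` times the plane integral of
`E(x) E(v) s(x) s((v + x) / 2)`.

The phase `E(x) E(v)` is unchanged by `x ↦ -x` and by exchanging `x` and `v`. Averaging the weight
over these symmetries turns it into the product `c(x) c(v)` with
`c(u) = cosh (π u / 2) / cosh (π u)` (`sechPi_symmetrise`), so the plane integral is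
`(∫ E c)² = (2 (I₁ + i I₂))²` (`integral_planeKernel`). The real part of `(1 - i)(I₁ + i I₂)²`
is `I₁² - I₂² + 2 I₁ I₂`.
-/

open Real MeasureTheory

/-! ### The self-dual hyperbolic secant -/

/-- The hyperbolic secant `t ↦ 1 / cosh (π t)`, normalised so as to be its own Fourier
transform. -/
noncomputable def sechPi (t : ℝ) : ℝ := 1 / Real.cosh (π * t)

lemma sechPi_pos (t : ℝ) : 0 < sechPi t := one_div_pos.2 (Real.cosh_pos _)

lemma sechPi_neg (t : ℝ) : sechPi (-t) = sechPi t := by simp [sechPi]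

@[fun_prop]
lemma continuous_sechPi : Continuous sechPi := by
  unfold sechPi
  exact continuous_const.div (by fun_prop) fun t => (Real.cosh_pos _).ne'

lemma sigmoid_two_pi (t : ℝ) :
    Real.sigmoid (2 * π * t) = Real.exp (π * t) / (2 * Real.cosh (π * t)) := by
  rw [Real.sigmoid_def, Real.cosh_eq]
  have h1 : Real.exp (-(2 * π * t)) = Real.exp (-(π * t)) * Real.exp (-(π * t)) := by
    rw [← Real.exp_add]; ring_nf
  have h2 : Real.exp (π * t) * Real.exp (-(π * t)) = 1 := by
    rw [← Real.exp_add]; simp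
  have := Real.exp_pos (π * t)
  have := Real.exp_pos (-(π * t))
  rw [h1]
  field_simp
  linear_combination (-1 : ℝ) * Real.exp (-(π * t)) * h2

lemma one_sub_sigmoid_two_pi (t : ℝ) :
    1 - Real.sigmoid (2 * π * t) = Real.exp (-(π * t)) / (2 * Real.cosh (π * t)) := by
  rw [← Real.sigmoid_neg, ← mul_neg, sigmoid_two_pi]
  simp

/-- After the substitution `x = sigmoid (2 π t)` the integral is `1 / π` times the
Beta integral `Β(1/2 + iy, 1/2 - iy)`, which the reflection formula evaluates as `π / cosh (π y)`. -/
lemma integral_exp_mul_sechPi (y : ℝ) :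
    ∫ t : ℝ, Complex.exp (2 * π * Complex.I * y * t) * sechPi t = sechPi y := by
  have hd : ∀ t ∈ (Set.univ : Set ℝ), HasDerivWithinAt (fun t => Real.sigmoid (2 * π * t))
      (Real.sigmoid (2 * π * t) * (1 - Real.sigmoid (2 * π * t)) * (2 * π)) Set.univ t := by
    intro t _
    have h := (Real.hasDerivAt_sigmoid (2 * π * t)).comp t ((hasDerivAt_id t).const_mul (2 * π))
    rw [mul_one] at h
    exact h.hasDerivWithinAt
  have hinj : Set.InjOn (fun t => Real.sigmoid (2 * π * t)) Set.univ := by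
    intro a _ b _ h
    have := Real.sigmoid_injective h
    have hp : (2 * π) ≠ 0 := by positivity
    exact mul_left_cancel₀ hp this
  have himg : (fun t => Real.sigmoid (2 * π * t)) '' Set.univ = Set.Ioo 0 1 := by
    rw [← Real.range_sigmoid, Set.image_univ]
    ext z
    constructor
    · rintro ⟨t, rfl⟩; exact ⟨_, rfl⟩
    · rintro ⟨t, rfl⟩
      refine ⟨t / (2 * π), ?_⟩
      have hp : (2 * π) ≠ 0 := by positivity
      simp only
      rw [mul_div_cancel₀ _ hp]
  set u : ℂ := 1 / 2 + y * Complex.I with hu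
  set v : ℂ := 1 / 2 - y * Complex.I with hv
  have hcv := integral_image_eq_integral_abs_deriv_smul MeasurableSet.univ hd hinj
    (fun x : ℝ => (x : ℂ) ^ (u - 1) * (1 - (x : ℂ)) ^ (v - 1))
  rw [himg, ← integral_Ioc_eq_integral_Ioo,
    ← intervalIntegral.integral_of_le zero_le_one, ← Complex.betaIntegral] at hcv
  have hpt : ∀ t : ℝ,
      |Real.sigmoid (2 * π * t) * (1 - Real.sigmoid (2 * π * t)) * (2 * π)| •
        (((Real.sigmoid (2 * π * t) : ℝ) : ℂ) ^ (u - 1) *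
          (1 - ((Real.sigmoid (2 * π * t) : ℝ) : ℂ)) ^ (v - 1))
      = π * (Complex.exp (2 * π * Complex.I * y * t) * sechPi t) := by
    intro t
    have hc := Real.cosh_pos (π * t)
    have hlog : Real.exp (Real.log (2 * Real.cosh (π * t))) = 2 * Real.cosh (π * t) :=
      Real.exp_log (by positivity)
    set A := Real.log (2 * Real.cosh (π * t)) with hA
    have h1 : ((Real.exp (π * t) / (2 * Real.cosh (π * t)) : ℝ) : ℂ)
        = Complex.exp ((π * t - A : ℝ) : ℂ) := by
      rw [← Complex.ofReal_exp, Real.exp_sub, hlog]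
    have h2 : ((Real.exp (-(π * t)) / (2 * Real.cosh (π * t)) : ℝ) : ℂ)
        = Complex.exp ((-(π * t) - A : ℝ) : ℂ) := by
      rw [← Complex.ofReal_exp, Real.exp_sub, hlog]
    have h3 : (1 : ℂ) - ((Real.sigmoid (2 * π * t) : ℝ) : ℂ)
        = ((1 - Real.sigmoid (2 * π * t) : ℝ) : ℂ) := by push_cast; rfl
    have hexp : ∀ (r : ℝ) (w : ℂ), Complex.exp (r : ℂ) ^ w = Complex.exp (r * w) := by
      intro r w
      rw [Complex.cpow_def_of_ne_zero (Complex.exp_ne_zero _), ← Complex.ofReal_exp,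
        ← Complex.ofReal_log (Real.exp_pos r).le, Real.log_exp]
    have hE : Complex.exp (A : ℂ) = 2 * Real.cosh (π * t) := by
      rw [← Complex.ofReal_exp, hlog]; push_cast; rfl
    have h4 : Real.sigmoid (2 * π * t) * (1 - Real.sigmoid (2 * π * t)) * (2 * π)
        = 2 * π / (2 * Real.cosh (π * t)) ^ 2 := by
      rw [one_sub_sigmoid_two_pi, sigmoid_two_pi]
      have : Real.exp (π * t) * Real.exp (-(π * t)) = 1 := by rw [← Real.exp_add]; simp
      field_simp
      linear_combination this
    rw [h3, h4, abs_of_pos (by positivity), one_sub_sigmoid_two_pi, sigmoid_two_pi, h1, h2,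
      hexp, hexp, ← Complex.exp_add]
    have h5 : ((π * t - A : ℝ) : ℂ) * (u - 1) + ((-(π * t) - A : ℝ) : ℂ) * (v - 1)
        = 2 * π * Complex.I * y * t + A := by
      rw [hu, hv]; push_cast; ring
    have hcc : ((Real.cosh (π * t) : ℝ) : ℂ) ≠ 0 := by exact_mod_cast hc.ne'
    rw [h5, Complex.exp_add, hE, Complex.real_smul, sechPi]
    push_cast at hcc ⊢
    field_simp
  simp only [hpt, setIntegral_univ] at hcv
  rw [integral_const_mul] at hcv
  have hB := Complex.Gamma_mul_Gamma_eq_betaIntegral (s := u) (t := v)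
    (by simp [hu]) (by simp [hv])
  have huv : u + v = 1 := by rw [hu, hv]; ring
  have hv1 : v = 1 - u := by rw [← huv]; ring
  rw [huv, Complex.Gamma_one, one_mul, hcv, hv1, Complex.Gamma_mul_Gamma_one_sub] at hB
  have hsin : Complex.sin (π * u) = Real.cosh (π * y) := by
    rw [hu, show (π : ℂ) * (1 / 2 + y * Complex.I) = (π * y : ℂ) * Complex.I + π / 2 by ring,
      Complex.sin_add_pi_div_two, Complex.cos_mul_I]
    push_cast; rfl
  have hpi : (π : ℂ) ≠ 0 := by exact_mod_cast Real.pi_ne_zero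
  rw [hsin] at hB
  apply mul_left_cancel₀ hpi
  rw [← hB, sechPi]
  push_cast
  ring

lemma integrable_sechPi : Integrable sechPi := by
  -- a non-integrable function would have integral `0`, but this one has integral `1`
  by_contra h
  have h0 := integral_exp_mul_sechPi 0
  simp only [Complex.ofReal_zero, mul_zero, zero_mul, Complex.exp_zero, one_mul,
    integral_complex_ofReal, integral_undef h] at h0
  simp [sechPi] at h0

/-! ### Pairing with Gaussian and Fresnel kernels -/

open FourierTransform in
lemma fourier_sechPi : 𝓕 (fun t : ℝ => (sechPi t : ℂ)) = fun y : ℝ => (sechPi y : ℂ) := by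
  ext y
  rw [Real.fourier_real_eq_integral_exp_smul, ← sechPi_neg y, ← integral_exp_mul_sechPi]
  congr 1
  ext t
  rw [smul_eq_mul]
  congr 2
  push_cast
  ring

open FourierTransform in
/-- The identity `∫ g ĥ = ∫ ĝ h` for `h = sechPi = ĥ` and a Gaussian `g` of genuine decay. -/
lemma integral_gaussian_mul_sechPi {a : ℂ} (ha : 0 < a.re) (x : ℝ) :
    ∫ y : ℝ, Complex.exp (-π * a * y ^ 2 + 2 * π * (Complex.I * x / 2) * y) * sechPi y
      = 1 / a ^ (1 / 2 : ℂ) * ∫ t : ℝ, Complex.exp (-π / a * (t - x / 2) ^ 2) * sechPi t := by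
  set g : ℝ → ℂ := fun y => Complex.exp (-π * a * y ^ 2 + 2 * π * (Complex.I * x / 2) * y)
    with hg
  have hgi : Integrable g := by
    have := integrable_cexp_quadratic (b := π * a)
      (by rw [Complex.re_ofReal_mul]; exact mul_pos pi_pos ha) (2 * π * (Complex.I * x / 2)) 0
    simpa [hg, neg_mul] using this
  have hsi : Integrable (fun t : ℝ => (sechPi t : ℂ)) := integrable_sechPi.ofReal
  have hF := VectorFourier.integral_fourierIntegral_smul_eq_flip (L := innerₗ ℝ)
    (e := Real.fourierChar) (μ := volume) (ν := volume)
    Real.continuous_fourierChar continuous_inner hgi hsi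
  have h1 : VectorFourier.fourierIntegral Real.fourierChar volume (innerₗ ℝ) g = 𝓕 g := rfl
  have h2 : VectorFourier.fourierIntegral Real.fourierChar volume (innerₗ ℝ).flip
      (fun t : ℝ => (sechPi t : ℂ)) = 𝓕 (fun t : ℝ => (sechPi t : ℂ)) := by
    rw [flip_innerₗ]; rfl
  rw [h1] at hF
  erw [h2] at hF
  rw [fourier_sechPi, hg, fourier_gaussian_pi' ha] at hF
  simp only [smul_eq_mul] at hF
  rw [← hF, ← integral_const_mul]
  congr 1
  ext t
  rw [show (t : ℂ) + Complex.I * (Complex.I * x / 2) = t - x / 2 by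
    linear_combination (x / 2 : ℂ) * Complex.I_mul_I]
  ring

open Filter Topology in
/-- The boundary case `a = i / (2 n)`, `Re a = 0`, obtained as the limit of
`a = ε + i / (2 n)`; the factor `sechPi` supplies the dominating function. -/
lemma integral_fresnel_mul_sechPi {n : ℝ} (hn : 0 < n) (x : ℝ) :
    ∫ y : ℝ, Complex.exp (-π * (Complex.I / (2 * n)) * y ^ 2
        + 2 * π * (Complex.I * x / 2) * y) * sechPi y
      = √n * (1 - Complex.I) * ∫ t : ℝ, Complex.exp (2 * π * n * Complex.I * (t - x / 2) ^ 2)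
        * sechPi t := by
  set a : ℝ → ℂ := fun ε => ε + Complex.I / (2 * n) with ha
  have hn' : (n : ℂ) ≠ 0 := by exact_mod_cast hn.ne'
  have hare : ∀ ε, (a ε).re = ε := by
    intro ε
    have : Complex.I / (2 * n) = ((1 / (2 * n) : ℝ) : ℂ) * Complex.I := by push_cast; ring
    simp [ha, this]
  have haim : ∀ ε, (a ε).im = 1 / (2 * n) := by
    intro ε
    have : Complex.I / (2 * n) = ((1 / (2 * n) : ℝ) : ℂ) * Complex.I := by push_cast; ring
    simp only [ha, this, Complex.add_im, Complex.ofReal_im, Complex.im_ofReal_mul, Complex.I_im]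
    ring
  have hane : ∀ ε, a ε ≠ 0 := by
    intro ε h
    have := haim ε
    rw [h, Complex.zero_im] at this
    have : 0 < 1 / (2 * n) := by positivity
    linarith
  have hac : Continuous a := by fun_prop
  have ha0 : a 0 = Complex.I / (2 * n) := by simp [ha]
  have hev : ∀ᶠ ε : ℝ in 𝓝[>] 0, 0 < ε := eventually_mem_nhdsWithin
  have hL : Tendsto (fun ε : ℝ => ∫ y : ℝ, Complex.exp (-π * a ε * y ^ 2
      + 2 * π * (Complex.I * x / 2) * y) * sechPi y) (𝓝[>] 0)
      (𝓝 (∫ y : ℝ, Complex.exp (-π * a 0 * y ^ 2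
        + 2 * π * (Complex.I * x / 2) * y) * sechPi y)) := by
    refine tendsto_integral_filter_of_dominated_convergence sechPi ?_ ?_ integrable_sechPi ?_
    · refine Eventually.of_forall fun ε => Continuous.aestronglyMeasurable (by fun_prop)
    · filter_upwards [hev] with ε hε
      refine Eventually.of_forall fun y => ?_
      rw [norm_mul, Complex.norm_exp, Complex.norm_real, Real.norm_of_nonneg (sechPi_pos y).le]
      refine mul_le_of_le_one_left (sechPi_pos y).le (Real.exp_le_one_iff.2 ?_)
      have : (-π * a ε * y ^ 2 + 2 * π * (Complex.I * x / 2) * y : ℂ)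
          = ((-π * y ^ 2 : ℝ) : ℂ) * a ε + ((π * x * y : ℝ) : ℂ) * Complex.I := by
        push_cast; ring
      rw [this, Complex.add_re, Complex.re_ofReal_mul, Complex.re_ofReal_mul, hare, Complex.I_re]
      have : 0 ≤ π * y ^ 2 * ε := by positivity
      linarith
    · refine Eventually.of_forall fun y => ?_
      refine (Continuous.tendsto ?_ 0).mono_left nhdsWithin_le_nhds
      fun_prop
  have hR : Tendsto (fun ε : ℝ => ∫ t : ℝ, Complex.exp (-π / a ε * (t - x / 2) ^ 2) * sechPi t)
      (𝓝[>] 0) (𝓝 (∫ t : ℝ, Complex.exp (-π / a 0 * (t - x / 2) ^ 2) * sechPi t)) := by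
    refine tendsto_integral_filter_of_dominated_convergence sechPi ?_ ?_ integrable_sechPi ?_
    · refine Eventually.of_forall fun ε => Continuous.aestronglyMeasurable (by fun_prop)
    · filter_upwards [hev] with ε hε
      refine Eventually.of_forall fun t => ?_
      rw [norm_mul, Complex.norm_exp, Complex.norm_real, Real.norm_of_nonneg (sechPi_pos t).le]
      refine mul_le_of_le_one_left (sechPi_pos t).le (Real.exp_le_one_iff.2 ?_)
      have : (-π / a ε * (t - x / 2) ^ 2 : ℂ)
          = ((-π * (t - x / 2) ^ 2 : ℝ) : ℂ) * (a ε)⁻¹ := by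
        push_cast; ring
      rw [this, Complex.re_ofReal_mul, Complex.inv_re, hare]
      have : 0 ≤ π * (t - x / 2) ^ 2 * (ε / Complex.normSq (a ε)) :=
        mul_nonneg (by positivity) (div_nonneg hε.le (Complex.normSq_nonneg _))
      linarith
    · refine Eventually.of_forall fun t => ?_
      refine (Continuous.tendsto ?_ 0).mono_left nhdsWithin_le_nhds
      have : Continuous fun ε => -π / a ε := continuous_const.div hac hane
      fun_prop
  have hK : Tendsto (fun ε : ℝ => 1 / a ε ^ (1 / 2 : ℂ)) (𝓝[>] 0)
      (𝓝 (√n * (1 - Complex.I))) := by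
    have hs : a 0 ∈ Complex.slitPlane := by
      right
      rw [haim]; positivity
    have h1 : Tendsto (fun ε : ℝ => a ε ^ (1 / 2 : ℂ)) (𝓝[>] 0) (𝓝 (a 0 ^ (1 / 2 : ℂ))) :=
      (((hac.tendsto 0).mono_left nhdsWithin_le_nhds)).cpow tendsto_const_nhds hs
    have hsq : ((√n : ℝ) : ℂ) ^ 2 = n := by
      rw [← Complex.ofReal_pow, Real.sq_sqrt hn.le]
    have hsn : ((√n : ℝ) : ℂ) ≠ 0 := by exact_mod_cast (Real.sqrt_pos.2 hn).ne'
    -- the principal square root of `i / (2 n)`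
    have h2 : a 0 ^ (1 / 2 : ℂ) = ((1 / (2 * √n) : ℝ) : ℂ) * (1 + Complex.I) := by
      have hre : 0 < (((1 / (2 * √n) : ℝ) : ℂ) * (1 + Complex.I)).re := by
        rw [Complex.re_ofReal_mul]
        have := Real.sqrt_pos.2 hn
        simp only [Complex.add_re, Complex.one_re, Complex.I_re]
        positivity
      rw [one_div, ← Complex.sq_cpow_two_inv hre, ha0]
      congr 1
      push_cast
      rw [← hsq]
      field_simp
      linear_combination (-1 : ℂ) * Complex.I_sq
    have h3 := (tendsto_const_nhds (x := (1 : ℂ)) (f := 𝓝[>] (0 : ℝ))).div h1 (by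
      rw [h2]
      have h4 : (1 + Complex.I) ≠ 0 := fun h => by simpa using congrArg Complex.re h
      have h5 : (1 / (2 * √n)) ≠ 0 := by have := Real.sqrt_pos.2 hn; positivity
      exact mul_ne_zero (by exact_mod_cast h5) h4)
    have h6 : √n * (1 - Complex.I) = 1 / a 0 ^ (1 / 2 : ℂ) := by
      rw [h2]
      have h4 : (1 + Complex.I) ≠ 0 := fun h => by simpa using congrArg Complex.re h
      push_cast
      field_simp
      linear_combination -Complex.I_sq
    rw [h6]
    exact h3
  have hlim := tendsto_nhds_unique (hL.congr' (by
    filter_upwards [hev] with ε hε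
    exact integral_gaussian_mul_sechPi (by rw [hare]; exact hε) x)) (hK.mul hR)
  have ha0' : -π / a 0 = 2 * π * n * Complex.I := by
    rw [ha0]
    have := Complex.I_ne_zero
    field_simp
    linear_combination (-1 : ℂ) * Complex.I_sq
  rw [ha0', ha0] at hlim
  exact hlim

/-! ### The integrals `I₁` and `I₂` -/

/-- The even kernel `cosh (π u / 2) / cosh (π u)` of the integrals `I₁` and `I₂`. -/
noncomputable def coshQuot (u : ℝ) : ℝ := Real.cosh (π * u / 2) / Real.cosh (π * u)

lemma coshQuot_neg (u : ℝ) : coshQuot (-u) = coshQuot u := by simp [coshQuot, neg_div]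

@[fun_prop]
lemma continuous_coshQuot : Continuous coshQuot := by
  unfold coshQuot
  exact Continuous.div (by fun_prop) (by fun_prop) fun t => (Real.cosh_pos _).ne'

lemma coshQuot_pos (u : ℝ) : 0 < coshQuot u := div_pos (Real.cosh_pos _) (Real.cosh_pos _)

lemma coshQuot_le (u : ℝ) : coshQuot u ≤ sechPi (u / 2) := by
  have h : Real.cosh (π * u) = Real.cosh (π * u / 2) ^ 2 + Real.sinh (π * u / 2) ^ 2 := by
    rw [← Real.cosh_two_mul]; congr 1; ring
  rw [coshQuot, sechPi, div_le_div_iff₀ (Real.cosh_pos _) (Real.cosh_pos _), h,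
    show π * (u / 2) = π * u / 2 by ring]
  nlinarith [sq_nonneg (Real.sinh (π * u / 2))]

lemma integrable_coshQuot : Integrable coshQuot := by
  refine (integrable_sechPi.comp_div (R := 2) two_ne_zero).mono'
    continuous_coshQuot.aestronglyMeasurable (Filter.Eventually.of_forall fun u => ?_)
  rw [Real.norm_of_nonneg (coshQuot_pos u).le]
  exact coshQuot_le u

/-- The quadratic phase `exp (i π n u² / 2)`. -/
noncomputable def chirp (n u : ℝ) : ℂ := Complex.exp ((π * n * u ^ 2 / 2 : ℝ) * Complex.I)

lemma norm_chirp (n u : ℝ) : ‖chirp n u‖ = 1 := Complex.norm_exp_ofReal_mul_I _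

lemma chirp_neg (n u : ℝ) : chirp n (-u) = chirp n u := by simp [chirp]

@[fun_prop]
lemma continuous_chirp (n : ℝ) : Continuous (chirp n) := by
  unfold chirp
  fun_prop

lemma integrable_chirp_mul_coshQuot (n : ℝ) : Integrable fun u => chirp n u * coshQuot u := by
  refine integrable_coshQuot.mono' (Continuous.aestronglyMeasurable (by fun_prop))
    (Filter.Eventually.of_forall fun u => ?_)
  rw [norm_mul, norm_chirp, one_mul, Complex.norm_real, Real.norm_of_nonneg (coshQuot_pos u).le]

/-- An even function integrates over the half-line to half its integral over the line. -/
lemma integral_Ioi_of_even {f : ℝ → ℝ} (hf : ∀ x, f (-x) = f x) :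
    ∫ x in Set.Ioi (0 : ℝ), f x = (∫ x, f x) / 2 := by
  have h := integral_comp_abs (f := f)
  have : ∀ x, f |x| = f x := by
    intro x
    rcases abs_choice x with h | h <;> rw [h]
    exact hf x
  simp only [this] at h
  rw [h]; ring

lemma integral_chirp_mul_coshQuot (n : ℝ) :
    ∫ u, chirp n u * coshQuot u
      = 2 * (((∫ x in Set.Ioi (0 : ℝ), (Real.cosh (π * x / 2) / Real.cosh (π * x))
          * Real.cos (π * n * x ^ 2 / 2) : ℝ) : ℂ)
        + ((∫ x in Set.Ioi (0 : ℝ), (Real.cosh (π * x / 2) / Real.cosh (π * x))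
          * Real.sin (π * n * x ^ 2 / 2) : ℝ) : ℂ) * Complex.I) := by
  have hi := integrable_chirp_mul_coshQuot n
  have hre : ∀ u, (chirp n u * coshQuot u).re
      = Real.cosh (π * u / 2) / Real.cosh (π * u) * Real.cos (π * n * u ^ 2 / 2) := by
    intro u
    rw [mul_comm, Complex.re_ofReal_mul, chirp, Complex.exp_ofReal_mul_I_re, coshQuot]
  have him : ∀ u, (chirp n u * coshQuot u).im
      = Real.cosh (π * u / 2) / Real.cosh (π * u) * Real.sin (π * n * u ^ 2 / 2) := by
    intro u
    rw [mul_comm, Complex.im_ofReal_mul, chirp, Complex.exp_ofReal_mul_I_im, coshQuot]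
  rw [integral_Ioi_of_even (fun x => by simp [neg_div]),
    integral_Ioi_of_even (fun x => by simp [neg_div])]
  have h1 := integral_re hi
  have h2 := integral_im hi
  simp only [RCLike.re_eq_complex_re, RCLike.im_eq_complex_im, hre, him] at h1 h2
  rw [h1, h2]
  apply Complex.ext <;> simp <;> ring

/-! ### Symmetrisation of the plane integral -/

/-- The function whose integral over the plane is evaluated by symmetrisation. -/
noncomputable def planeKernel (n : ℝ) (p : ℝ × ℝ) : ℂ :=
  chirp n p.1 * sechPi p.1 * (chirp n p.2 * sechPi ((p.2 + p.1) / 2))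

lemma integrable_planeKernel (n : ℝ) : Integrable (planeKernel n) (volume.prod volume) := by
  have h := integrable_sechPi.convolution_integrand (ContinuousLinearMap.mul ℝ ℝ)
    (integrable_sechPi.comp_div (R := 2) two_ne_zero) (μ := volume) (ν := volume)
  have hmp : MeasurePreserving (fun p : ℝ × ℝ => (p.2, -p.1)) (volume.prod volume)
      (volume.prod volume) :=
    ((MeasurePreserving.id volume).prod (Measure.measurePreserving_neg volume)).comp
      Measure.measurePreserving_swap
  have h2 := hmp.integrable_comp_of_integrable h
  refine h2.mono' (Continuous.aestronglyMeasurable (by unfold planeKernel; fun_prop))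
    (Filter.Eventually.of_forall fun p => ?_)
  simp only [planeKernel, norm_mul, norm_chirp, one_mul, Complex.norm_real, Function.comp_apply,
    Real.norm_of_nonneg (sechPi_pos _).le, ContinuousLinearMap.mul_apply', sechPi_neg,
    sub_neg_eq_add, le_refl]

lemma sechPi_symmetrise (u v : ℝ) :
    sechPi u * sechPi ((v + u) / 2) + sechPi u * sechPi ((v - u) / 2)
      + sechPi v * sechPi ((v + u) / 2) + sechPi v * sechPi ((v - u) / 2)
      = 4 * (coshQuot u * coshQuot v) := by
  simp only [sechPi, coshQuot]
  have e1 : π * ((v + u) / 2) = π * v / 2 + π * u / 2 := by ring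
  have e2 : π * ((v - u) / 2) = π * v / 2 - π * u / 2 := by ring
  have hu : Real.cosh (π * u) = 2 * Real.cosh (π * u / 2) ^ 2 - 1 := by
    rw [show π * u = 2 * (π * u / 2) by ring, Real.cosh_two_mul, Real.sinh_sq,
      show 2 * (π * u / 2) / 2 = π * u / 2 by ring]
    ring
  have hv : Real.cosh (π * v) = 2 * Real.cosh (π * v / 2) ^ 2 - 1 := by
    rw [show π * v = 2 * (π * v / 2) by ring, Real.cosh_two_mul, Real.sinh_sq,
      show 2 * (π * v / 2) / 2 = π * v / 2 by ring]
    ring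
  have hcu := Real.cosh_pos (π * u)
  have hcv := Real.cosh_pos (π * v)
  have hp := Real.cosh_pos (π * v / 2 + π * u / 2)
  have hm := Real.cosh_pos (π * v / 2 - π * u / 2)
  have hs : Real.cosh (π * v / 2 + π * u / 2) + Real.cosh (π * v / 2 - π * u / 2)
      = 2 * (Real.cosh (π * v / 2) * Real.cosh (π * u / 2)) := by
    rw [Real.cosh_add, Real.cosh_sub]; ring
  have hpr : 2 * (Real.cosh (π * v / 2 + π * u / 2) * Real.cosh (π * v / 2 - π * u / 2))
      = Real.cosh (π * u) + Real.cosh (π * v) := by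
    rw [Real.cosh_add, Real.cosh_sub, hu, hv]
    linear_combination -2 * Real.sinh (π * u / 2) ^ 2 * Real.sinh_sq (π * v / 2)
      - 2 * (Real.cosh (π * v / 2) ^ 2 - 1) * Real.sinh_sq (π * u / 2)
  rw [e1, e2]
  generalize Real.cosh (π * v / 2 + π * u / 2) = P at *
  generalize Real.cosh (π * v / 2 - π * u / 2) = M at *
  field_simp
  linear_combination (Real.cosh (π * u) + Real.cosh (π * v)) * hs
    - 2 * (Real.cosh (π * u / 2) * Real.cosh (π * v / 2)) * hpr

/-- The phase is invariant under `(u, v) ↦ (-u, v)` and `(u, v) ↦ (v, u)`, so the weight may be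
averaged over these symmetries, and the average factorises. -/
lemma integral_planeKernel (n : ℝ) :
    ∫ p, planeKernel n p ∂(volume.prod volume) = (∫ u, chirp n u * coshQuot u) ^ 2 := by
  have hF := integrable_planeKernel n
  have hneg : MeasurePreserving (fun p : ℝ × ℝ => (-p.1, p.2)) (volume.prod volume)
      (volume.prod volume) :=
    (Measure.measurePreserving_neg volume).prod (MeasurePreserving.id volume)
  have hnegE : MeasurableEmbedding (fun p : ℝ × ℝ => (-p.1, p.2)) :=
    ((MeasurableEquiv.neg ℝ).prodCongr (MeasurableEquiv.refl ℝ)).measurableEmbedding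
  have hswap : MeasurePreserving (Prod.swap : ℝ × ℝ → ℝ × ℝ) (volume.prod volume)
      (volume.prod volume) := Measure.measurePreserving_swap
  have hswapE : MeasurableEmbedding (Prod.swap : ℝ × ℝ → ℝ × ℝ) :=
    MeasurableEquiv.prodComm.measurableEmbedding
  have hG := hneg.integrable_comp_of_integrable hF
  have iG := hneg.integral_comp hnegE (planeKernel n)
  have hFs := hswap.integrable_comp_of_integrable hF
  have iFs := hswap.integral_comp hswapE (planeKernel n)
  have hGs := hswap.integrable_comp_of_integrable hG
  have iGs := hswap.integral_comp hswapE (planeKernel n ∘ fun p : ℝ × ℝ => (-p.1, p.2))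
  simp only [Function.comp_def] at hG hFs hGs iGs
  have key : ∫ p : ℝ × ℝ, (planeKernel n p + planeKernel n (-p.1, p.2) + planeKernel n p.swap
        + planeKernel n (-p.swap.1, p.swap.2)) ∂(volume.prod volume)
      = ∫ p : ℝ × ℝ, 4 * ((chirp n p.1 * coshQuot p.1) * (chirp n p.2 * coshQuot p.2))
          ∂(volume.prod volume) := by
    congr 1
    ext ⟨u, v⟩
    have h := congrArg (fun r : ℝ => (r : ℂ)) (sechPi_symmetrise u v)
    have h1 : sechPi ((u - v) / 2) = sechPi ((v - u) / 2) := by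
      rw [← sechPi_neg]; congr 1; ring
    simp only [planeKernel, Prod.swap, chirp_neg, sechPi_neg, ← sub_eq_add_neg, h1, add_comm u v]
    push_cast at h
    linear_combination chirp n u * chirp n v * h
  have e1 := integral_add hF hG
  have e2 := integral_add (hF.add hG) hFs
  have e3 := integral_add ((hF.add hG).add hFs) hGs
  simp only [Pi.add_apply] at e1 e2 e3
  rw [e3, e2, e1, iG, iFs, iGs, iG, integral_const_mul,
    integral_prod_mul (fun u => chirp n u * coshQuot u) (fun u => chirp n u * coshQuot u)] at key
  linear_combination key / 4

/-! ### Evaluation of the double integral -/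

/-- The inner integral: even symmetrisation turns `cos A cos B` into the real part of
`exp (i (A + B))`, and the Fresnel form of the self-duality of `sechPi` replaces `y` by the
dual variable `v`. -/
lemma inner_integral {n : ℝ} (hn : 0 < n) (x : ℝ) :
    ∫ y in Set.Ioi (0 : ℝ), Real.cos (π / 2 * (n * x ^ 2 - y ^ 2 / n)) * Real.cos (π * x * y) /
          (Real.cosh (π * x) * Real.cosh (π * y))
      = (√n * (1 - Complex.I) / 4 * ∫ v, planeKernel n (x, v)).re := by
  have hn' : (n : ℂ) ≠ 0 := by exact_mod_cast hn.ne'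
  set g : ℝ → ℂ := fun y => chirp n x * sechPi x *
    (Complex.exp (-π * (Complex.I / (2 * n)) * y ^ 2
        + 2 * π * (Complex.I * x / 2) * y) * sechPi y) with hg
  have hgf : ∀ y, g y = ((sechPi x * sechPi y : ℝ) : ℂ) *
      Complex.exp (((π / 2 * (n * x ^ 2 - y ^ 2 / n) + π * x * y : ℝ) : ℂ) * Complex.I) := by
    intro y
    have : Complex.exp (((π / 2 * (n * x ^ 2 - y ^ 2 / n) + π * x * y : ℝ) : ℂ) * Complex.I)
        = chirp n x * Complex.exp (-π * (Complex.I / (2 * n)) * y ^ 2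
        + 2 * π * (Complex.I * x / 2) * y) := by
      rw [chirp, ← Complex.exp_add]
      congr 1
      push_cast
      field_simp
      ring
    rw [this, hg]
    push_cast
    ring
  have hgi : Integrable g := by
    refine (integrable_sechPi.const_mul (sechPi x)).mono'
      (Continuous.aestronglyMeasurable (by fun_prop)) (Filter.Eventually.of_forall fun y => ?_)
    rw [hgf, norm_mul, Complex.norm_exp_ofReal_mul_I, mul_one, Complex.norm_real,
      Real.norm_of_nonneg (mul_pos (sechPi_pos _) (sechPi_pos _)).le]
  have hval : ∫ y, g y = √n * (1 - Complex.I) / 2 * ∫ v, planeKernel n (x, v) := by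
    rw [hg, integral_const_mul, integral_fresnel_mul_sechPi hn x]
    -- substitution `v = 2 t - x`
    have hsub : ∫ t : ℝ, Complex.exp (2 * π * n * Complex.I * (t - x / 2) ^ 2) * sechPi t
        = (1 / 2 : ℂ) * ∫ v : ℝ, chirp n v * sechPi ((v + x) / 2) := by
      have h1 := integral_add_right_eq_self (μ := volume)
        (fun t : ℝ => Complex.exp (2 * π * n * Complex.I * (t - x / 2) ^ 2) * sechPi t) (x / 2)
      have h2 := Measure.integral_comp_div (fun s : ℝ =>
        Complex.exp (2 * π * n * Complex.I * ((s + x / 2 : ℝ) - x / 2) ^ 2) * sechPi (s + x / 2)) 2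
      rw [← h1]
      have h3 : ∀ v : ℝ, chirp n v * sechPi ((v + x) / 2) = Complex.exp (2 * π * n * Complex.I *
          ((v / 2 + x / 2 : ℝ) - x / 2) ^ 2) * sechPi (v / 2 + x / 2) := by
        intro v
        rw [chirp, show (v + x) / 2 = v / 2 + x / 2 by ring]
        congr 2
        push_cast
        ring
      simp only [h3]
      rw [h2]
      simp [Complex.real_smul]
    have h4 : ∫ v, planeKernel n (x, v)
        = chirp n x * sechPi x * ∫ v : ℝ, chirp n v * sechPi ((v + x) / 2) := by
      simp only [planeKernel]
      rw [integral_const_mul]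
    rw [hsub, h4]
    ring
  rw [integral_Ioi_of_even (fun y => by simp)]
  have hsum : ∀ y, Real.cos (π / 2 * (n * x ^ 2 - y ^ 2 / n)) * Real.cos (π * x * y) /
      (Real.cosh (π * x) * Real.cosh (π * y)) = ((g y).re + (g (-y)).re) / 2 := by
    intro y
    rw [hgf, hgf, Complex.re_ofReal_mul, Complex.re_ofReal_mul, Complex.exp_ofReal_mul_I_re,
      Complex.exp_ofReal_mul_I_re, sechPi_neg, neg_sq, mul_neg, Real.cos_add, Real.cos_add,
      Real.cos_neg, Real.sin_neg, sechPi, sechPi]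
    have := Real.cosh_pos (π * x)
    have := Real.cosh_pos (π * y)
    field_simp
    ring
  have hre := integral_re hgi
  simp only [RCLike.re_eq_complex_re] at hre
  have hneg := integral_neg_eq_self (fun y => (g y).re) volume
  simp only [hsum]
  have hadd := integral_add hgi.re hgi.comp_neg.re
  simp only [RCLike.re_eq_complex_re] at hadd
  rw [integral_div, hadd, hneg, hre, hval]
  rw [show (√n * (1 - Complex.I) / 2 * ∫ v, planeKernel n (x, v) : ℂ)
    = ((2 : ℝ) : ℂ) * (√n * (1 - Complex.I) / 4 * ∫ v, planeKernel n (x, v)) by push_cast; ring,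
    Complex.re_ofReal_mul]
  ring

theorem stmt_0 (n : ℝ) (hn : 0 < n)
    (I₁ I₂ : ℝ)
    (hI₁ : I₁ = ∫ x in Set.Ioi (0:ℝ),
      (Real.cosh (π * x / 2) / Real.cosh (π * x)) * Real.cos (π * n * x ^ 2 / 2))
    (hI₂ : I₂ = ∫ x in Set.Ioi (0:ℝ),
      (Real.cosh (π * x / 2) / Real.cosh (π * x)) * Real.sin (π * n * x ^ 2 / 2)) :
    (∫ x in Set.Ioi (0:ℝ), ∫ y in Set.Ioi (0:ℝ),
        Real.cos (π / 2 * (n * x ^ 2 - y ^ 2 / n)) * Real.cos (π * x * y) /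
          (Real.cosh (π * x) * Real.cosh (π * y)))
      = Real.sqrt n / 2 * I₁ ^ 2 - Real.sqrt n / 2 * I₂ ^ 2 + Real.sqrt n * I₁ * I₂ := by
  rw [integral_Ioi_of_even (fun x => by simp)]
  simp only [inner_integral hn]
  have hi : Integrable fun x => √n * (1 - Complex.I) / 4 * ∫ v, planeKernel n (x, v) :=
    (integrable_planeKernel n).integral_prod_left.const_mul _
  have hre := integral_re hi
  simp only [RCLike.re_eq_complex_re] at hre
  rw [hre, integral_const_mul, ← integral_prod _ (integrable_planeKernel n),
    integral_planeKernel, integral_chirp_mul_coshQuot, ← hI₁, ← hI₂]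
  have : (√n * (1 - Complex.I) / 4 * (2 * (I₁ + I₂ * Complex.I)) ^ 2 : ℂ)
      = ((√n * (I₁ ^ 2 - I₂ ^ 2 + 2 * I₁ * I₂) : ℝ) : ℂ)
        + ((√n * (2 * I₁ * I₂ - I₁ ^ 2 + I₂ ^ 2) : ℝ) : ℂ) * Complex.I := by
    push_cast
    linear_combination (√n * (I₂ ^ 2 - 2 * I₁ * I₂ - Complex.I * I₂ ^ 2) : ℂ) * Complex.I_sq
  rw [this, Complex.add_re, Complex.ofReal_re, Complex.re_ofReal_mul, Complex.I_re]
  ring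
end

section
/- For every real number α > 0, ∫₀^∞ ∫₀^∞ x y e^{−x²−y²} sin(2xy) / (cosh(α x) · cosh(2π y/α)) dx dy = (α/(2√π)) · ( ∫₀^∞ (sinh(α x/2)/cosh(α x)) · x e^{−x²} dx )². -/
/-!
The hyperbolic secant is, up to scaling, its own Fourier transform:
`1 / cosh (2πy/α) = α/(2π) ∫ cos (2yu) / cosh (αu/2) du`. Here this follows from the reflection
formula `Γ(1/2 + it) Γ(1/2 - it) = π / cosh (πt)`: its left side is the beta integral
`B(1/2 + it, 1/2 - it)`, which the substitution `x = sigmoid s` turns into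
`∫ exp (its) / (2 cosh (s/2)) ds`.

By evenness the double integral is a quarter of the one over the plane. Inserting the formula above
and integrating out `y` with the Gaussian sine transform (`integral_gauss_sin`) gives
(`inner_integral`) a multiple of
`∫∫ x v exp (-x² - v²) / (cosh (αx) cosh (α(x - v)/2)) dv dx`.
Averaging this with its image under `x ↔ v` (`integral_symm`), the sum
`cosh (αx) + cosh (αv) = 2 cosh (α(x-v)/2) cosh (α(x+v)/2)` cancels the coupling factor, and
`cosh (α(x+v)/2)` expands into two products. The `cosh cosh` part vanishes because it is odd, and
the `sinh sinh` part is the square on the right-hand side.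
-/

open Real MeasureTheory

/-- The integrand of `B(1/2 + it, 1/2 - it)` after the substitution `x = sigmoid s`: with
`c = log (2 cosh (s/2))` one has `log x = s/2 - c` and `log (1 - x) = -s/2 - c`. -/
lemma beta_integrand_sigmoid (t s : ℝ) :
    |sigmoid s * (1 - sigmoid s)| •
      (((sigmoid s : ℝ) : ℂ) ^ ((1 / 2 + t * Complex.I : ℂ) - 1) *
        (1 - ((sigmoid s : ℝ) : ℂ)) ^ ((1 / 2 - t * Complex.I : ℂ) - 1)) =
      Complex.exp (Complex.I * (t * s)) * ((1 / (2 * cosh (s / 2)) : ℝ) : ℂ) := by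
  have hc : 0 < 2 * cosh (s / 2) := by have := cosh_pos (s / 2); positivity
  set c := log (2 * cosh (s / 2)) with hcdef
  have hec : exp c = 2 * cosh (s / 2) := exp_log hc
  have hp : sigmoid s = exp (s / 2 - c) := by
    rw [exp_sub, hec, cosh_eq, sigmoid_def, inv_eq_one_div, div_eq_div_iff (by positivity)
      (by positivity), show -s = -(s / 2) + -(s / 2) by ring, exp_add]
    have : exp (s / 2) * exp (-(s / 2)) = 1 := by rw [← exp_add]; simp
    linear_combination (-exp (-(s / 2))) * this
  have hq : 1 - sigmoid s = exp (-(s / 2) - c) := by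
    rw [← sigmoid_neg, ← sigmoid_mul_rexp_neg, hp, ← exp_add]; congr 1; ring
  have hq' : 1 - ((sigmoid s : ℝ) : ℂ) = Complex.exp ((-(s / 2) - c : ℝ) : ℂ) := by
    rw [← Complex.ofReal_exp, ← hq]; push_cast; rfl
  have key : ∀ (a : ℝ) (z : ℂ), Complex.exp (a : ℂ) ^ z = Complex.exp (a * z) := by
    intro a z
    rw [Complex.cpow_def_of_ne_zero (Complex.exp_ne_zero _), ← Complex.ofReal_exp,
      ← Complex.ofReal_log (exp_pos _).le, log_exp]
  rw [hq, hq', hp, abs_of_pos (by positivity), Complex.ofReal_exp, key, key, ← exp_add,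
    Complex.real_smul, Complex.ofReal_exp, ← hec, one_div (exp c), ← exp_neg, Complex.ofReal_exp,
    ← Complex.exp_add, ← Complex.exp_add, ← Complex.exp_add]
  congr 1
  push_cast
  ring

/-- Fourier transform of the hyperbolic secant, from the beta integral `B(1/2 + it, 1/2 - it)` and
the reflection formula for `Γ`. -/
lemma integral_exp_div_cosh (t : ℝ) :
    Integrable (fun s : ℝ ↦ Complex.exp (Complex.I * (t * s)) *
      ((1 / (2 * cosh (s / 2)) : ℝ) : ℂ)) ∧
    ∫ s : ℝ, Complex.exp (Complex.I * (t * s)) * ((1 / (2 * cosh (s / 2)) : ℝ) : ℂ) =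
      ((π / cosh (π * t) : ℝ) : ℂ) := by
  have hu : 0 < (1 / 2 + t * Complex.I : ℂ).re := by simp
  have hv : 0 < (1 / 2 - t * Complex.I : ℂ).re := by simp
  have hd : ∀ x ∈ Set.univ, HasDerivWithinAt sigmoid (sigmoid x * (1 - sigmoid x)) Set.univ x :=
    fun x _ ↦ (hasDerivAt_sigmoid x).hasDerivWithinAt
  have hinj : Set.InjOn sigmoid Set.univ := sigmoid_injective.injOn
  have hbeta := Complex.betaIntegral_convergent hu hv
  rw [intervalIntegrable_iff_integrableOn_Ioo_of_le zero_le_one, ← range_sigmoid,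
    ← Set.image_univ, integrableOn_image_iff_integrableOn_abs_deriv_smul .univ hd hinj] at hbeta
  simp only [beta_integrand_sigmoid, integrableOn_univ] at hbeta
  refine ⟨hbeta, ?_⟩
  have h := Complex.Gamma_mul_Gamma_eq_betaIntegral hu hv
  rw [Complex.betaIntegral, intervalIntegral.integral_of_le zero_le_one,
    integral_Ioc_eq_integral_Ioo, ← range_sigmoid, ← Set.image_univ,
    integral_image_eq_integral_abs_deriv_smul .univ hd hinj] at h
  simp only [beta_integrand_sigmoid, Measure.restrict_univ] at h
  rw [show (1 / 2 + t * Complex.I + (1 / 2 - t * Complex.I) : ℂ) = 1 by ring, Complex.Gamma_one,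
    one_mul, show (1 / 2 - t * Complex.I : ℂ) = 1 - (1 / 2 + t * Complex.I) by ring,
    Complex.Gamma_mul_Gamma_one_sub] at h
  rw [← h, mul_add, mul_one_div, Complex.sin_add, Complex.sin_pi_div_two, Complex.cos_pi_div_two,
    ← mul_assoc, Complex.cos_mul_I]
  push_cast
  ring

lemma integrable_sech {a : ℝ} (ha : a ≠ 0) : Integrable (fun u : ℝ ↦ 1 / cosh (a * u)) := by
  have h := ((integral_exp_div_cosh 0).1.re.const_mul 2).comp_mul_left' (R := 2 * a) (by simpa)
  refine h.congr (.of_forall fun u ↦ ?_)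
  simp only [Complex.ofReal_zero, zero_mul, mul_zero, Complex.exp_zero, one_mul,
    RCLike.re_to_complex, Complex.ofReal_re, show 2 * a * u / 2 = a * u by ring]
  field_simp

lemma sech_eq_integral {α : ℝ} (hα : 0 < α) (y : ℝ) :
    1 / cosh (2 * π * y / α) = α / (2 * π) * ∫ u : ℝ, cos (2 * y * u) / cosh (α * u / 2) := by
  obtain ⟨hi, h⟩ := integral_exp_div_cosh (2 * y / α)
  have h2 := congrArg Complex.re h
  have h3 := integral_re hi
  simp only [RCLike.re_to_complex] at h3
  rw [← h3, Complex.ofReal_re] at h2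
  have h4 := Measure.integral_comp_mul_left (fun s : ℝ ↦ (Complex.exp (Complex.I *
    (((2 * y / α : ℝ) : ℂ) * s)) * ((1 / (2 * cosh (s / 2)) : ℝ) : ℂ)).re) α
  rw [h2, abs_of_pos (by positivity), smul_eq_mul] at h4
  have h5 : ∀ u : ℝ, (Complex.exp (Complex.I *
    (((2 * y / α : ℝ) : ℂ) * ((α * u : ℝ) : ℂ))) * ((1 / (2 * cosh (α * u / 2)) : ℝ) : ℂ)).re =
      (1 / 2) * (cos (2 * y * u) / cosh (α * u / 2)) := by
    intro u
    rw [Complex.re_mul_ofReal, mul_comm Complex.I, ← Complex.ofReal_mul,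
      Complex.exp_ofReal_mul_I_re, show 2 * y / α * (α * u) = 2 * y * u by field_simp]
    field_simp
  simp only [h5] at h4
  rw [integral_const_mul] at h4
  have h6 : ∫ u : ℝ, cos (2 * y * u) / cosh (α * u / 2) =
      2 * (α⁻¹ * (π / cosh (π * (2 * y / α)))) := by linarith
  rw [h6, show π * (2 * y / α) = 2 * π * y / α by ring]
  have := cosh_pos (2 * π * y / α)
  field_simp

lemma integrable_gauss : Integrable (fun x : ℝ ↦ exp (-x ^ 2)) := by
  simpa using integrable_exp_neg_mul_sq one_pos

lemma integrable_mul_gauss : Integrable (fun x : ℝ ↦ x * exp (-x ^ 2)) := by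
  simpa using integrable_mul_exp_neg_mul_sq one_pos

lemma integral_gauss_cos (k : ℝ) :
    ∫ y : ℝ, exp (-y ^ 2) * cos (2 * k * y) = √π * exp (-k ^ 2) := by
  have h := fourierIntegral_gaussian (b := 1) (by simp) (2 * k : ℝ)
  have e : ∀ x : ℝ, Complex.exp (Complex.I * ((2 * k : ℝ) : ℂ) * x) *
      Complex.exp (-1 * (x : ℂ) ^ 2) =
      Complex.exp ((2 * k * x : ℝ) * Complex.I) * ((exp (-x ^ 2) : ℝ) : ℂ) := by
    intro x; push_cast; ring_nf
  simp only [e] at h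
  have hi : Integrable (fun x : ℝ ↦ Complex.exp ((2 * k * x : ℝ) * Complex.I) *
      ((exp (-x ^ 2) : ℝ) : ℂ)) := by
    refine integrable_gauss.ofReal.bdd_mul (c := 1) (by fun_prop) (.of_forall fun x ↦ ?_)
    rw [Complex.norm_exp_ofReal_mul_I]
  have h3 := integral_re hi
  simp only [RCLike.re_to_complex] at h3
  rw [h] at h3
  have e2 : ((π : ℂ) / 1) ^ (1 / 2 : ℂ) * Complex.exp (-((2 * k : ℝ) : ℂ) ^ 2 / (4 * 1)) =
      ((√π * exp (-k ^ 2) : ℝ) : ℂ) := by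
    rw [sqrt_eq_rpow, Complex.ofReal_mul (π ^ (1 / 2 : ℝ)), Complex.ofReal_cpow pi_pos.le]
    push_cast
    ring_nf
  rw [e2, Complex.ofReal_re] at h3
  rw [← h3]
  congr 1 with x
  rw [Complex.re_mul_ofReal, Complex.exp_ofReal_mul_I_re, mul_comm]

/-- Integration by parts reduces the sine integral to the cosine transform of the Gaussian. -/
lemma integral_gauss_sin (k : ℝ) :
    ∫ y : ℝ, y * exp (-y ^ 2) * sin (2 * k * y) = √π * (k * exp (-k ^ 2)) := by
  have i1 : Integrable (fun y : ℝ ↦ y * exp (-y ^ 2) * sin (2 * k * y)) :=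
    integrable_mul_gauss.mul_bdd (c := 1) (by fun_prop) (.of_forall fun x ↦ by
      simpa using abs_sin_le_one _)
  have i2 : Integrable (fun y : ℝ ↦ exp (-y ^ 2) * cos (2 * k * y)) :=
    integrable_gauss.mul_bdd (c := 1) (by fun_prop) (.of_forall fun x ↦ by
      simpa using abs_cos_le_one _)
  have i3 : Integrable (fun y : ℝ ↦ exp (-y ^ 2) * sin (2 * k * y)) :=
    integrable_gauss.mul_bdd (c := 1) (by fun_prop) (.of_forall fun x ↦ by
      simpa using abs_sin_le_one _)
  have hz := integral_eq_zero_of_hasDerivAt_of_integrable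
    (f := fun y : ℝ ↦ exp (-y ^ 2) * sin (2 * k * y))
    (f' := fun y : ℝ ↦ 2 * k * (exp (-y ^ 2) * cos (2 * k * y)) -
      2 * (y * exp (-y ^ 2) * sin (2 * k * y)))
    (fun y ↦ by
      have h1 : HasDerivAt (fun y : ℝ ↦ exp (-y ^ 2)) (exp (-y ^ 2) * -(2 * y)) y := by
        simpa using ((hasDerivAt_id y).pow 2).neg.exp
      have h2 : HasDerivAt (fun y : ℝ ↦ sin (2 * k * y)) (cos (2 * k * y) * (2 * k)) y := by
        simpa using ((hasDerivAt_id y).const_mul (2 * k)).sin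
      exact (h1.mul h2).congr_deriv (by ring))
    ((i2.const_mul _).sub (i1.const_mul _)) i3
  rw [integral_sub (i2.const_mul _) (i1.const_mul _), integral_const_mul, integral_const_mul,
    integral_gauss_cos] at hz
  linarith

/-- Parseval-type step: write the secant as a cosine integral in `u`, integrate out `y`, and
substitute `v = x - u`. -/
lemma inner_integral_s5 {α : ℝ} (hα : 0 < α) (x : ℝ) :
    ∫ y : ℝ, y * exp (-y ^ 2) * sin (2 * x * y) / cosh (2 * π * y / α) =
      α / (2 * √π) * ∫ v : ℝ, v * exp (-v ^ 2) / cosh (α * (x - v) / 2) := by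
  have ic : Integrable (fun u : ℝ ↦ 1 / cosh (α * u / 2)) := by
    simpa only [div_mul_eq_mul_div] using integrable_sech (a := α / 2) (by positivity)
  have i1 : Integrable (fun y : ℝ ↦ y * exp (-y ^ 2) * sin (2 * x * y)) :=
    integrable_mul_gauss.mul_bdd (c := 1) (by fun_prop) (.of_forall fun x ↦ by
      simpa using abs_sin_le_one _)
  have hF : Integrable (Function.uncurry fun y u : ℝ ↦
      y * exp (-y ^ 2) * sin (2 * x * y) * (cos (2 * y * u) / cosh (α * u / 2)))
      (volume.prod volume) := by
    have := (i1.mul_prod ic).mul_bdd (c := 1) (g := fun z : ℝ × ℝ ↦ cos (2 * z.1 * z.2))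
      (by fun_prop) (.of_forall fun z ↦ by simpa using abs_cos_le_one _)
    refine this.congr (.of_forall fun z ↦ ?_)
    simp only [Function.uncurry]
    ring
  have e1 : ∀ y : ℝ, y * exp (-y ^ 2) * sin (2 * x * y) / cosh (2 * π * y / α) =
      α / (2 * π) * ∫ u : ℝ,
        y * exp (-y ^ 2) * sin (2 * x * y) * (cos (2 * y * u) / cosh (α * u / 2)) := by
    intro y
    rw [integral_const_mul, div_eq_mul_one_div, sech_eq_integral hα]
    ring
  have ib : ∀ k : ℝ, Integrable (fun y : ℝ ↦ y * exp (-y ^ 2) * sin (2 * k * y)) := fun k ↦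
    integrable_mul_gauss.mul_bdd (c := 1) (by fun_prop) (.of_forall fun x ↦ by
      simpa using abs_sin_le_one _)
  have e2 : ∀ u : ℝ, ∫ y : ℝ,
        y * exp (-y ^ 2) * sin (2 * x * y) * (cos (2 * y * u) / cosh (α * u / 2)) =
      √π / 2 * ((x + u) * exp (-(x + u) ^ 2) / cosh (α * u / 2)) +
      √π / 2 * ((x - u) * exp (-(x - u) ^ 2) / cosh (α * u / 2)) := by
    intro u
    have : ∀ y : ℝ, y * exp (-y ^ 2) * sin (2 * x * y) * (cos (2 * y * u) / cosh (α * u / 2)) =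
        1 / (2 * cosh (α * u / 2)) * (y * exp (-y ^ 2) * sin (2 * (x + u) * y) +
          y * exp (-y ^ 2) * sin (2 * (x - u) * y)) := by
      intro y
      rw [show 2 * (x + u) * y = 2 * x * y + 2 * y * u by ring,
        show 2 * (x - u) * y = 2 * x * y - 2 * y * u by ring, sin_add, sin_sub]
      have := cosh_pos (α * u / 2)
      field_simp
      ring
    simp only [this]
    rw [integral_const_mul, integral_add (ib _) (ib _), integral_gauss_sin, integral_gauss_sin]
    have := cosh_pos (α * u / 2)
    field_simp
  have bd : ∀ w : ℝ, ‖1 / cosh w‖ ≤ 1 := fun w ↦ by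
    rw [norm_of_nonneg (by have := cosh_pos w; positivity), div_le_one (cosh_pos w)]
    exact one_le_cosh w
  have im : Integrable (fun u : ℝ ↦ (x - u) * exp (-(x - u) ^ 2) / cosh (α * u / 2)) := by
    refine ((integrable_mul_gauss.comp_sub_left x).mul_bdd (c := 1)
      ic.aestronglyMeasurable (.of_forall fun u ↦ bd _)).congr (.of_forall fun u ↦ ?_)
    simp only
    ring
  have ip : Integrable (fun u : ℝ ↦ (x + u) * exp (-(x + u) ^ 2) / cosh (α * u / 2)) := by
    refine ((integrable_mul_gauss.comp_add_left x).mul_bdd (c := 1)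
      ic.aestronglyMeasurable (.of_forall fun u ↦ bd _)).congr (.of_forall fun u ↦ ?_)
    simp only
    ring
  have e3 : ∫ u : ℝ, (x + u) * exp (-(x + u) ^ 2) / cosh (α * u / 2) =
      ∫ u : ℝ, (x - u) * exp (-(x - u) ^ 2) / cosh (α * u / 2) := by
    rw [← integral_neg_eq_self]
    congr 1 with u
    rw [show α * -u / 2 = -(α * u / 2) by ring, cosh_neg, sub_eq_add_neg]
  have e4 : ∫ u : ℝ, (x - u) * exp (-(x - u) ^ 2) / cosh (α * u / 2) =
      ∫ v : ℝ, v * exp (-v ^ 2) / cosh (α * (x - v) / 2) := by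
    rw [← integral_sub_left_eq_self _ volume x]
    simp
  simp only [e1]
  rw [integral_const_mul, integral_integral_swap hF]
  simp only [e2]
  rw [integral_add (ip.const_mul _) (im.const_mul _), integral_const_mul, integral_const_mul,
    e3, e4]
  have : √π * √π = π := mul_self_sqrt pi_pos.le
  field_simp
  linear_combination 2 * (∫ v : ℝ, v * exp (-v ^ 2) / cosh (α * (x - v) / 2)) * this

/-- Sum-to-product formula, with the factor `cosh ((a + b) / 2)` expanded. -/
lemma cosh_add_cosh (a b : ℝ) : cosh a + cosh b =
    2 * cosh ((a - b) / 2) * (cosh (a / 2) * cosh (b / 2) + sinh (a / 2) * sinh (b / 2)) := by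
  have h : ∀ s t : ℝ, cosh (s + t) + cosh (s - t) = 2 * cosh t * cosh s := fun s t ↦ by
    rw [cosh_add, cosh_sub]; ring
  rw [← cosh_add, show a / 2 + b / 2 = (a + b) / 2 by ring, ← h]
  ring_nf

/-- Symmetrizing in `x ↔ v` cancels the coupling factor `cosh (α * (x - v) / 2)` and leaves a sum of
two products of one-variable integrals, the first of which has odd factors. -/
lemma integral_symm (α : ℝ) :
    ∫ x : ℝ, ∫ v : ℝ, x * exp (-x ^ 2) / cosh (α * x) *
        (v * exp (-v ^ 2) / cosh (α * (x - v) / 2)) =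
      (∫ x : ℝ, sinh (α * x / 2) / cosh (α * x) * (x * exp (-x ^ 2))) ^ 2 := by
  have mc : ∀ w : ℝ, cosh w ≠ 0 := fun w ↦ (cosh_pos w).ne'
  have bd : ∀ w : ℝ, ‖1 / cosh w‖ ≤ 1 := fun w ↦ by
    rw [norm_of_nonneg (by have := cosh_pos w; positivity), div_le_one (cosh_pos w)]
    exact one_le_cosh w
  have hg := integrable_mul_gauss
  have cle : ∀ x : ℝ, cosh (α * x / 2) ≤ cosh (α * x) := fun x ↦ by
    rw [cosh_le_cosh, abs_div]
    have := abs_nonneg (α * x)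
    rw [abs_two]; linarith
  have iA : Integrable (fun x : ℝ ↦ cosh (α * x / 2) / cosh (α * x) * (x * exp (-x ^ 2))) := by
    refine hg.bdd_mul (c := 1) (Continuous.aestronglyMeasurable
      (Continuous.div (by fun_prop) (by fun_prop) fun x ↦ mc _)) (.of_forall fun x ↦ ?_)
    rw [norm_div, norm_of_nonneg (cosh_pos _).le, norm_of_nonneg (cosh_pos _).le,
      div_le_one (cosh_pos _)]
    exact cle x
  have iB : Integrable (fun x : ℝ ↦ sinh (α * x / 2) / cosh (α * x) * (x * exp (-x ^ 2))) := by
    refine hg.bdd_mul (c := 1) (Continuous.aestronglyMeasurable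
      (Continuous.div (by fun_prop) (by fun_prop) fun x ↦ mc _)) (.of_forall fun x ↦ ?_)
    rw [norm_div, norm_of_nonneg (cosh_pos (α * x)).le, div_le_one (cosh_pos _), norm_eq_abs,
      abs_sinh, ← cosh_abs (α * x)]
    refine (sinh_lt_cosh _).le.trans ?_
    rw [cosh_abs, cosh_abs]
    exact cle x
  have A0 : ∫ x : ℝ, cosh (α * x / 2) / cosh (α * x) * (x * exp (-x ^ 2)) = 0 := by
    have h := integral_neg_eq_self
      (fun x : ℝ ↦ cosh (α * x / 2) / cosh (α * x) * (x * exp (-x ^ 2))) volume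
    have e : ∀ x : ℝ, cosh (α * -x / 2) / cosh (α * -x) * (-x * exp (-(-x) ^ 2)) =
        -(cosh (α * x / 2) / cosh (α * x) * (x * exp (-x ^ 2))) := by
      intro x
      rw [show α * -x / 2 = -(α * x / 2) by ring, show α * -x = -(α * x) by ring, cosh_neg,
        cosh_neg, neg_sq]
      ring
    simp only [e] at h
    rw [integral_neg] at h
    linarith
  have iK : Integrable (Function.uncurry fun x v : ℝ ↦ x * exp (-x ^ 2) / cosh (α * x) *
        (v * exp (-v ^ 2) / cosh (α * (x - v) / 2))) (volume.prod volume) := by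
    refine ((hg.mul_prod hg).bdd_mul (c := 1)
      (f := fun z : ℝ × ℝ ↦ 1 / cosh (α * z.1) * (1 / cosh (α * (z.1 - z.2) / 2)))
      (Continuous.aestronglyMeasurable ?_)
      (.of_forall fun z ↦ ?_)).congr (.of_forall fun z ↦ ?_)
    · exact (Continuous.div (by fun_prop) (by fun_prop) fun x ↦ mc _).mul
        (Continuous.div (by fun_prop) (by fun_prop) fun x ↦ mc _)
    · rw [norm_mul]
      exact mul_le_one₀ (bd _) (norm_nonneg _) (bd _)
    · simp only [Function.uncurry]
      ring
  have hs := integral_prod _ iK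
  have hsw := integral_prod_swap (μ := (volume : Measure ℝ)) (ν := (volume : Measure ℝ))
    (Function.uncurry fun x v : ℝ ↦ x * exp (-x ^ 2) / cosh (α * x) *
        (v * exp (-v ^ 2) / cosh (α * (x - v) / 2)))
  have hadd := integral_add iK iK.swap
  have e : ∀ z : ℝ × ℝ, (Function.uncurry fun x v : ℝ ↦ x * exp (-x ^ 2) / cosh (α * x) *
        (v * exp (-v ^ 2) / cosh (α * (x - v) / 2))) z +
      ((Function.uncurry fun x v : ℝ ↦ x * exp (-x ^ 2) / cosh (α * x) *
        (v * exp (-v ^ 2) / cosh (α * (x - v) / 2))) ∘ Prod.swap) z =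
      2 * ((cosh (α * z.1 / 2) / cosh (α * z.1) * (z.1 * exp (-z.1 ^ 2))) *
        (cosh (α * z.2 / 2) / cosh (α * z.2) * (z.2 * exp (-z.2 ^ 2)))) +
      2 * ((sinh (α * z.1 / 2) / cosh (α * z.1) * (z.1 * exp (-z.1 ^ 2))) *
        (sinh (α * z.2 / 2) / cosh (α * z.2) * (z.2 * exp (-z.2 ^ 2)))) := by
    rintro ⟨x, v⟩
    simp only [Function.uncurry, Function.comp, Prod.swap]
    rw [show α * (v - x) / 2 = -(α * (x - v) / 2) by ring, cosh_neg]
    have h := cosh_add_cosh (α * x) (α * v)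
    rw [← mul_sub] at h
    have h1 := mc (α * x)
    have h2 := mc (α * v)
    have h3 := mc (α * (x - v) / 2)
    generalize cosh (α * x) = cx at *
    generalize cosh (α * v) = cv at *
    generalize cosh (α * (x - v) / 2) = cd at *
    generalize cosh (α * x / 2) = c1 at *
    generalize sinh (α * x / 2) = s1 at *
    generalize cosh (α * v / 2) = c2 at *
    generalize sinh (α * v / 2) = s2 at *
    field_simp
    linear_combination x * v * h
  simp only [e] at hadd
  rw [integral_add ((iA.mul_prod iA).const_mul 2) ((iB.mul_prod iB).const_mul 2),
    integral_const_mul, integral_const_mul,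
    integral_prod_mul (fun x : ℝ ↦ cosh (α * x / 2) / cosh (α * x) * (x * exp (-x ^ 2)))
      (fun x : ℝ ↦ cosh (α * x / 2) / cosh (α * x) * (x * exp (-x ^ 2))),
    integral_prod_mul (fun x : ℝ ↦ sinh (α * x / 2) / cosh (α * x) * (x * exp (-x ^ 2)))
      (fun x : ℝ ↦ sinh (α * x / 2) / cosh (α * x) * (x * exp (-x ^ 2))), A0] at hadd
  simp only [Function.comp_def] at hadd
  rw [hsw, hs] at hadd
  simp only [Function.uncurry] at hadd
  linarith

theorem stmt_5 (α : ℝ) (hα : 0 < α) :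
    (∫ x in Set.Ioi (0:ℝ), ∫ y in Set.Ioi (0:ℝ),
        x * y * Real.exp (-x ^ 2 - y ^ 2) * Real.sin (2 * x * y) /
          (Real.cosh (α * x) * Real.cosh (2 * π * y / α)))
      = α / (2 * Real.sqrt π) *
        (∫ x in Set.Ioi (0:ℝ),
          (Real.sinh (α * x / 2) / Real.cosh (α * x)) * (x * Real.exp (-x ^ 2))) ^ 2 := by
  -- An even function integrates over the line to twice its integral over the half-line.
  have half : ∀ f : ℝ → ℝ, (∀ x, f (-x) = f x) → ∫ x, f x = 2 * ∫ x in Set.Ioi (0:ℝ), f x := by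
    intro f hf
    rw [← integral_comp_abs]
    congr 1 with x
    rcases abs_choice x with h | h <;> rw [h]
    exact (hf x).symm
  have hB := half (fun x ↦ sinh (α * x / 2) / cosh (α * x) * (x * exp (-x ^ 2))) fun x ↦ by
    rw [show α * -x / 2 = -(α * x / 2) by ring, show α * -x = -(α * x) by ring, sinh_neg,
      cosh_neg, neg_sq]
    ring
  have hy : ∀ x : ℝ, ∫ y in Set.Ioi (0:ℝ), x * y * exp (-x ^ 2 - y ^ 2) * sin (2 * x * y) /
      (cosh (α * x) * cosh (2 * π * y / α)) = α / (4 * √π) *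
        ∫ v : ℝ, x * exp (-x ^ 2) / cosh (α * x) *
          (v * exp (-v ^ 2) / cosh (α * (x - v) / 2)) := by
    intro x
    have h := half (fun y ↦ y * exp (-y ^ 2) * sin (2 * x * y) / cosh (2 * π * y / α)) fun y ↦ by
      rw [show 2 * π * -y / α = -(2 * π * y / α) by ring,
        show 2 * x * -y = -(2 * x * y) by ring, sin_neg, cosh_neg, neg_sq]
      ring
    rw [inner_integral_s5 hα] at h
    have e : ∀ y : ℝ, x * y * exp (-x ^ 2 - y ^ 2) * sin (2 * x * y) /
        (cosh (α * x) * cosh (2 * π * y / α)) = x * exp (-x ^ 2) / cosh (α * x) *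
          (y * exp (-y ^ 2) * sin (2 * x * y) / cosh (2 * π * y / α)) := by
      intro y
      rw [sub_eq_add_neg, exp_add]
      field_simp
    simp only [e]
    rw [integral_const_mul, integral_const_mul]
    linear_combination (-(x * exp (-x ^ 2) / cosh (α * x)) / 2) * h
  have hx := half (fun x ↦ ∫ y in Set.Ioi (0:ℝ),
    x * y * exp (-x ^ 2 - y ^ 2) * sin (2 * x * y) /
      (cosh (α * x) * cosh (2 * π * y / α))) fun x ↦ by
    congr 1 with y
    rw [show α * -x = -(α * x) by ring, show 2 * -x * y = -(2 * x * y) by ring, sin_neg,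
      cosh_neg, neg_sq]
    ring
  have hx' : ∫ x : ℝ, ∫ y in Set.Ioi (0:ℝ),
      x * y * exp (-x ^ 2 - y ^ 2) * sin (2 * x * y) /
        (cosh (α * x) * cosh (2 * π * y / α)) = α / (4 * √π) *
      (∫ x : ℝ, sinh (α * x / 2) / cosh (α * x) * (x * exp (-x ^ 2))) ^ 2 := by
    simp only [hy]
    rw [integral_const_mul, integral_symm α]
  rw [hB, hx] at hx'
  linear_combination hx' / 2
end
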